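/- arXiv:1703.03516 — 2 statements merged into one kernel-verified Lean document; each statement's English description precedes it below -/
import Mathlib

section
/- Let k be an algebraically closed field of characteristic 5. For every squarefree polynomial f(x) = Σ_{i=1}^{9} c_i x^i ∈ k[x] with c_9 = 1, the 4×4 matrix A with entries a_{ij} = κ_{5i−j}, where f(x)² = Σ_m κ_m x^m, does not have rank 1. (Equivalently: there are no smooth hyperelliptic curves of genus 4 with a-number 3 over a field of characteristic 5.) -/
open Polynomial

/-!
Write `F = f ^ ((p - 1) / 2)`. Every exponent `n < p * g` prime to `p` has the form `p * i - j` with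
`1 ≤ i ≤ g` and `1 ≤ j ≤ p - 1`, so when `p - 1 ≤ g` the Cartier–Manin matrix sees all coefficients
of `F'`. If its rank is at most one, its entries are products `uᵢ * vⱼ`, that is,
`F' = P(X ^ p) * q` with `deg q < p`.

The factor `h = P(X ^ p)` has derivative zero, so it divides all higher derivatives of `F` too. If
`F = f ^ n` then the `n`-th one is congruent to `n! * f' ^ n` modulo `f`, which is a unit modulo `f`
because `f` is separable and `n < p`. Hence `f` is coprime to `h`, and `f ^ (n - 1)`, which divides
`F' = h * q`, divides `q`. For `p ≥ 5` the degree of `q` is too small for that.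
-/

section CommSemiring

variable {R : Type*} [CommSemiring R]

theorem dvd_iterate_derivative_of_dvd {h F : R[X]} (hh : derivative h = 0) (hF : h ∣ F) (n : ℕ) :
    h ∣ derivative^[n] F := by
  induction n with
  | zero => exact hF
  | succ n ih =>
    obtain ⟨q, hq⟩ := ih
    rw [Function.iterate_succ_apply', hq, derivative_mul, hh, zero_mul, zero_add]
    exact dvd_mul_right h _

theorem natDegree_pow_half_le {f : R[X]} {p g : ℕ} (hg : p ≤ g + 1)
    (hf : f.natDegree ≤ 2 * g + 2) : (f ^ ((p - 1) / 2)).natDegree ≤ g * p :=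
  calc
    (f ^ ((p - 1) / 2)).natDegree ≤ (p - 1) / 2 * f.natDegree := natDegree_pow_le
    _ ≤ (p - 1) / 2 * (2 * g + 2) := Nat.mul_le_mul_left _ hf
    _ = (p - 1) / 2 * 2 * (g + 1) := by ring
    _ ≤ (p - 1) * (g + 1) := Nat.mul_le_mul_right _ (Nat.div_mul_le_self _ _)
    _ ≤ g * p := by
      rcases p with _ | p
      · simp
      · rw [Nat.add_sub_cancel]
        linarith

theorem eq_expand_ofFn_mul_ofFn [DecidableEq R] {F : R[X]} {p g : ℕ} (u : Fin g → R)
    (w : Fin p → R) (hdeg : F.natDegree < g * p)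
    (hF : ∀ (i : Fin g) (r : Fin p), F.coeff (r + p * i) = u i * w r) :
    F = expand R p (ofFn g u) * ofFn p w :=
  calc
    F = ∑ n : Fin (g * p), monomial n (F.coeff n) := by
      rw [Fin.sum_univ_eq_sum_range fun n => monomial n (F.coeff n)]
      exact as_sum_range' F _ hdeg
    _ = ∑ i : Fin g, ∑ r : Fin p, monomial (r + p * i) (u i * w r) := by
      simp only [← finProdFinEquiv.sum_comp, Fintype.sum_prod_type, finProdFinEquiv_apply_val, hF]
    _ = expand R p (ofFn g u) * ofFn p w := by
      simp only [ofFn_eq_sum_monomial, map_sum, expand_monomial, Finset.sum_mul_sum,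
        monomial_mul_monomial, add_comm (_ * p), mul_comm p]

end CommSemiring

section CommRing

variable {R : Type*} [CommRing R]

theorem dvd_iterate_derivative_pow_mul_sub (f u : R[X]) (n : ℕ) :
    f ∣ derivative^[n] (f ^ n * u) - (n.factorial : R[X]) * derivative f ^ n * u := by
  induction n generalizing u with
  | zero => simp
  | succ n ih =>
    have hderiv : derivative (f ^ (n + 1) * u) =
        f ^ n * ((n + 1 : R[X]) * derivative f * u + f * derivative u) := by
      rw [derivative_mul, derivative_pow_succ]
      simp only [map_add, map_natCast, map_one]
      ring
    rw [Function.iterate_succ_apply, hderiv]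
    refine (dvd_iff_dvd_of_dvd_sub ?_).1 (ih ((n + 1 : R[X]) * derivative f * u + f * derivative u))
    refine ⟨-((n.factorial : R[X]) * derivative f ^ n * derivative u), ?_⟩
    push_cast [Nat.factorial_succ]
    ring

theorem isCoprime_of_dvd_derivative_pow {f h : R[X]} {n : ℕ} (hf : f.Separable)
    (hn : IsUnit ((n + 1).factorial : R)) (hh : derivative h = 0)
    (hdvd : h ∣ derivative (f ^ (n + 1))) : IsCoprime f h := by
  have hfact : IsUnit ((n + 1).factorial : R[X]) := by
    simpa only [map_natCast] using hn.map (C : R →+* R[X])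
  have hlead : IsCoprime f (((n + 1).factorial : R[X]) * derivative f ^ (n + 1)) :=
    (isCoprime_mul_unit_left_right hfact _ _).2 (IsCoprime.pow_right hf)
  obtain ⟨w, hw⟩ := dvd_iterate_derivative_pow_mul_sub f 1 (n + 1)
  have hiter : IsCoprime f (derivative^[n + 1] (f ^ (n + 1))) := by
    have hexp : derivative^[n + 1] (f ^ (n + 1)) =
        ((n + 1).factorial : R[X]) * derivative f ^ (n + 1) + f * w := by
      simpa only [mul_one, sub_eq_iff_eq_add'] using hw
    rw [hexp]
    exact hlead.add_mul_left_right w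
  exact hiter.of_isCoprime_of_dvd_right (dvd_iterate_derivative_of_dvd hh hdvd n)

theorem exists_derivative_eq_expand_mul {F : R[X]} {p g : ℕ} [CharP R p] (hp : 2 ≤ p)
    (hg : p ≤ g + 1) (hdeg : F.natDegree ≤ g * p) (u v : Fin g → R)
    (hF : ∀ i j : Fin g, F.coeff (p * (i + 1) - (j + 1)) = u i * v j) :
    ∃ P q : R[X], derivative F = expand R p P * q ∧ q.natDegree < p := by
  classical
  -- For `r = p - 1` the truncated index `p - 2 - r` is junk, but then the factor `r + 1` is zero.
  let w : Fin p → R := fun r => ((r : ℕ) + 1) * v ⟨p - 2 - r, by lia⟩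
  refine ⟨ofFn g u, ofFn p w, eq_expand_ofFn_mul_ofFn u w ?_ fun i r => ?_,
    ofFn_natDegree_lt (by lia) w⟩
  · have hpos : 0 < g * p := Nat.mul_pos (by lia) (by lia)
    have hderiv := natDegree_derivative_le F
    lia
  · have hcast : ((r + p * i : ℕ) + 1 : R) = (r : ℕ) + 1 := by simp
    rw [coeff_derivative, hcast]
    rcases eq_or_ne ((r : ℕ) + 1) p with hr | hr
    · have hzero : ((r : ℕ) + 1 : R) = 0 := by
        exact_mod_cast (congrArg Nat.cast hr).trans (CharP.cast_eq_zero R p)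
      simp only [w, hzero, mul_zero, zero_mul]
    · have hindex : (r + p * i + 1 : ℕ) = p * (i + 1) - (p - 2 - r + 1) := by
        rw [mul_add_one]
        generalize p * (i : ℕ) = m
        lia
      rw [hindex, hF i ⟨p - 2 - r, by lia⟩]
      ring

end CommRing

section Field

variable {k : Type*} [Field k]

theorem exists_eq_vecMulVec_of_rank_le_one {m n : Type*} [Finite m] [Fintype n]
    {A : Matrix m n k} (hA : A.rank ≤ 1) : ∃ u v, A = Matrix.vecMulVec u v := by
  rw [Matrix.rank_eq_finrank_span_row, Submodule.finrank_le_one_iff_isPrincipal] at hA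
  obtain ⟨v, hv⟩ := hA
  have hrow (i : m) : ∃ a : k, a • v = A.row i := by
    rw [← Submodule.mem_span_singleton, ← hv]
    exact Submodule.subset_span (Set.mem_range_self i)
  choose u hu using hrow
  exact ⟨u, v, Matrix.ext fun i j => (congrFun (hu i) j).symm⟩

theorem mul_natDegree_le_of_derivative_pow_eq_expand_mul {f P q : k[X]} {p n : ℕ} [CharP k p]
    (hf : f.Separable) (hdeg : f.natDegree ≠ 0) (hn : n + 1 < p)
    (h : derivative (f ^ (n + 1)) = expand k p P * q) : n * f.natDegree ≤ q.natDegree := by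
  have hfact : IsUnit ((n + 1).factorial : k) :=
    haveI : Fact p.Prime := ⟨CharP.char_prime_of_ne_zero k (Nat.ne_zero_of_lt hn)⟩
    (IsUnit.natCast_factorial_iff_of_charP p).2 hn
  have hq : q ≠ 0 := by
    rintro rfl
    have hcop : IsCoprime f 0 :=
      isCoprime_of_dvd_derivative_pow hf hfact derivative_zero (by rw [h, mul_zero])
    exact hdeg (natDegree_eq_zero_of_isUnit (isCoprime_zero_right.1 hcop))
  have hexpand : derivative (expand k p P) = 0 := by simp [derivative_expand]
  have hcop : IsCoprime f (expand k p P) :=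
    isCoprime_of_dvd_derivative_pow hf hfact hexpand (h.symm ▸ dvd_mul_right _ q)
  have hdvd : f ^ n ∣ expand k p P * q := by
    rw [← h]
    exact pow_sub_one_dvd_derivative_of_pow_dvd (n := n + 1) dvd_rfl
  rw [← natDegree_pow]
  exact natDegree_le_of_dvd (hcop.pow_left.dvd_of_dvd_mul_left hdvd) hq

/-- The `g × g` Cartier–Manin matrix of `y ^ 2 = f(x)` in characteristic `p`. Row and column indices
start at `0`, so the entry `(i, j)` is the classical `κ_{p(i + 1) - (j + 1)}`. -/
noncomputable def cartierManinMatrix (p g : ℕ) (f : k[X]) : Matrix (Fin g) (Fin g) k :=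
  .of fun i j => (f ^ ((p - 1) / 2)).coeff (p * (i + 1) - (j + 1))

theorem no_rank_one_char5_genus4_general {p g : ℕ} [CharP k p] (hp : 5 ≤ p) (hg : p ≤ g + 1)
    {f : k[X]} (hf : f.Separable) (hlower : 2 * g + 1 ≤ f.natDegree)
    (hupper : f.natDegree ≤ 2 * g + 2) : 2 ≤ (cartierManinMatrix p g f).rank := by
  by_contra! hrank
  obtain ⟨u, v, huv⟩ := exists_eq_vecMulVec_of_rank_le_one (Nat.le_of_lt_succ hrank)
  obtain ⟨n, hn⟩ : ∃ n, (p - 1) / 2 = n + 1 := Nat.exists_eq_add_one.2 (by lia)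
  have hdeg : (f ^ (n + 1)).natDegree ≤ g * p := hn ▸ natDegree_pow_half_le hg hupper
  have hentry (i j : Fin g) : (f ^ (n + 1)).coeff (p * (i + 1) - (j + 1)) = u i * v j := by
    simpa only [cartierManinMatrix, hn, Matrix.of_apply, Matrix.vecMulVec_apply] using
      congrFun (congrFun huv i) j
  obtain ⟨P, q, hPq, hq⟩ := exists_derivative_eq_expand_mul (by lia) hg hdeg u v hentry
  have hle := mul_natDegree_le_of_derivative_pow_eq_expand_mul hf (by lia) (by lia) hPq
  have hfq : f.natDegree ≤ n * f.natDegree := Nat.le_mul_of_pos_left _ (by lia)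
  lia

end Field

theorem no_rank_one_char5_genus4
    (k : Type*) [Field k] [IsAlgClosed k] [CharP k 5]
    (c : ℕ → k) (hclead : c 9 = 1)
    (f : k[X]) (hf : f = ∑ i ∈ Finset.Icc 1 9, C (c i) * X ^ i)
    (A : Matrix (Fin 4) (Fin 4) k)
    (hA : ∀ i j : Fin 4,
      A i j = (f ^ 2).coeff (5 * ((i : ℕ) + 1) - ((j : ℕ) + 1)))
    (hsqf : Squarefree f) :
    A.rank ≠ 1 := by
  have hdeg : f.natDegree = 9 := by
    rw [hf]
    refine natDegree_eq_of_le_of_coeff_ne_zero (natDegree_sum_le_of_forall_le _ _ fun i hi => ?_) ?_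
    · exact (natDegree_C_mul_X_pow_le _ _).trans (Finset.mem_Icc.1 hi).2
    · simp [hclead]
  have hrank : 2 ≤ (cartierManinMatrix 5 4 f).rank :=
    no_rank_one_char5_genus4_general le_rfl le_rfl
      (PerfectField.separable_iff_squarefree.2 hsqf) hdeg.ge (by lia)
  have hmatrix : A = cartierManinMatrix 5 4 f := Matrix.ext hA
  rw [hmatrix]
  exact (Nat.lt_of_succ_le hrank).ne'
end

section
/- Let k be an algebraically closed field of characteristic 7. For every squarefree polynomial f(x) = Σ_{i=1}^{13} c_i x^i ∈ k[x] with c_13 = 1, the 6×6 matrix A with entries a_{ij} = κ_{7i−j}, where f(x)³ = Σ_m κ_m x^m, does not have rank 1. (Equivalently: there are no smooth hyperelliptic curves of genus 6 with a-number 5 over a field of characteristic 7.) -/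
open Polynomial

/-!
Write `F = f ^ n` with `n = (p - 1) / 2`. In genus `p - 1`, the columns of the Cartier–Manin matrix
list the coefficients of `F` in the nonzero residue classes of exponents modulo `p`. The extreme
coefficients of `F`, at `X ^ n` and at `X ^ (p * (p - 2) + n + 1)`, are nonzero; if the rank is at
most one, they force every nonzero class other than `n` and `n + 1` to vanish, so
`F = P(X ^ p) + X ^ n * (X + t) * Q(X ^ p)`. Hence `F' = M * B` with `M = (X ^ n * (X + t))'` and
`B' = 0`. Eliminating `B` between this equation and its derivative shows that `f` divides
`M * f' ^ 2`, hence divides `M` by separability, although its degree exceeds that of `M`.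
-/

section LinearAlgebra

variable {k ι κ : Type*} [Field k] [Finite ι] [Fintype κ]

theorem exists_col_eq_smul_of_rank_le_one {A : Matrix ι κ k} (hA : A.rank ≤ 1) {i₀ : ι} {j₀ : κ}
    (h₀ : A i₀ j₀ ≠ 0) (j : κ) : ∃ t : k, A.col j = t • A.col j₀ := by
  rw [Matrix.rank_eq_finrank_span_cols, Submodule.finrank_le_one_iff_isPrincipal] at hA
  obtain ⟨v, hv⟩ := hA
  have col_mem (j : κ) : ∃ a : k, a • v = A.col j :=
    Submodule.mem_span_singleton.1 (hv ▸ Submodule.subset_span (Set.mem_range_self j))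
  obtain ⟨a, ha⟩ := col_mem j
  obtain ⟨b, hb⟩ := col_mem j₀
  have hb₀ : b ≠ 0 := by
    rintro rfl
    exact h₀ (by simpa using (congrFun hb i₀).symm)
  exact ⟨a / b, by rw [← ha, ← hb, smul_smul, div_mul_cancel₀ a hb₀]⟩

end LinearAlgebra

section Multisection

variable {R : Type*} [CommSemiring R]

/-- The `r`-th multisection of `F` modulo `p`: the polynomial whose `i`-th coefficient is the
coefficient of `X ^ (p * i + r)` in `F`. -/
noncomputable def multisection (p r : ℕ) (F : R[X]) : R[X] :=
  contract p (divX^[r] F)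

theorem coeff_iterate_divX (r : ℕ) (F : R[X]) (m : ℕ) :
    (divX^[r] F).coeff m = F.coeff (m + r) := by
  induction r generalizing m with
  | zero => rfl
  | succ r ih => rw [Function.iterate_succ_apply', coeff_divX, ih, add_assoc, add_comm 1 r]

theorem coeff_multisection {p : ℕ} (hp : p ≠ 0) (r : ℕ) (F : R[X]) (i : ℕ) :
    (multisection p r F).coeff i = F.coeff (p * i + r) := by
  rw [multisection, coeff_contract hp, coeff_iterate_divX, mul_comm]

theorem coeff_X_pow_mul_expand {p r : ℕ} (hr : r < p) (P : R[X]) (m : ℕ) :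
    (X ^ r * expand R p P).coeff m = if r = m % p then P.coeff (m / p) else 0 := by
  have hp : 0 < p := by omega
  split_ifs with h
  · rw [h, coeff_X_pow_mul', if_pos (Nat.mod_le m p), coeff_expand hp, if_pos (Nat.dvd_sub_mod m),
      ← Nat.div_eq_sub_mod_div]
  · rw [coeff_X_pow_mul', coeff_expand hp]
    split_ifs with hrm hdvd
    · exact absurd ((Nat.mod_eq_of_lt hr).symm.trans ((Nat.modEq_iff_dvd' hrm).2 hdvd)) h
    all_goals rfl

theorem sum_X_pow_mul_expand_multisection {p : ℕ} (hp : p ≠ 0) (F : R[X]) :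
    ∑ r ∈ Finset.range p, X ^ r * expand R p (multisection p r F) = F := by
  ext m
  have hm : m % p ∈ Finset.range p := Finset.mem_range.2 (Nat.mod_lt m hp.bot_lt)
  calc (∑ r ∈ Finset.range p, X ^ r * expand R p (multisection p r F)).coeff m
      = ∑ r ∈ Finset.range p, if r = m % p then (multisection p r F).coeff (m / p) else 0 := by
        rw [finsetSum_coeff]
        exact Finset.sum_congr rfl fun r hr => coeff_X_pow_mul_expand (Finset.mem_range.1 hr) _ m
    _ = (multisection p (m % p) F).coeff (m / p) := by rw [Finset.sum_ite_eq', if_pos hm]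
    _ = F.coeff m := by rw [coeff_multisection hp, Nat.div_add_mod]

end Multisection

section Decomposition

variable {R : Type*} [CommSemiring R] [NoZeroDivisors R] {p n : ℕ} {F : R[X]}

theorem multisection_eq_zero_of_eq_C_mul (hn : n + 1 < p)
    (hdeg : F.natDegree = p * (p - 2) + (n + 1)) (hlow : ∀ r < n, F.coeff r = 0)
    (hFn : F.coeff n ≠ 0)
    (hprop : ∀ r, 0 < r → r < p → ∃ t, multisection p r F = C t * multisection p (n + 1) F)
    {r : ℕ} (hr₀ : 0 < r) (hrp : r < p) (hrn : r ≠ n) (hrn' : r ≠ n + 1) :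
    multisection p r F = 0 := by
  have coeff_eq {s : ℕ} {t : R} (h : multisection p s F = C t * multisection p (n + 1) F) (i : ℕ) :
      F.coeff (p * i + s) = t * F.coeff (p * i + (n + 1)) := by
    simpa only [coeff_C_mul, coeff_multisection (by omega : p ≠ 0)] using congrArg (coeff · i) h
  obtain ⟨t, ht⟩ := hprop r hr₀ hrp
  suffices t = 0 by rw [ht, this, C_0, zero_mul]
  rcases hrn.lt_or_gt with hlt | hgt
  · obtain ⟨s, hs⟩ := hprop n (by omega) (by omega)
    have hF_succ : F.coeff (n + 1) ≠ 0 := fun h => hFn (by simpa [h] using coeff_eq hs 0)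
    simpa [hlow r hlt, hF_succ] using coeff_eq ht 0
  · have hlead : F.coeff (p * (p - 2) + (n + 1)) ≠ 0 := by
      rw [← hdeg, coeff_natDegree, leadingCoeff_ne_zero]
      exact ne_zero_of_natDegree_gt (n := 0) (by omega)
    have hzero : F.coeff (p * (p - 2) + r) = 0 := coeff_eq_zero_of_natDegree_lt (by omega)
    simpa [hzero, hlead] using coeff_eq ht (p - 2)

theorem exists_eq_expand_add_X_pow_mul_expand (hn₀ : 0 < n) (hn : n + 1 < p)
    (hdeg : F.natDegree = p * (p - 2) + (n + 1)) (hlow : ∀ r < n, F.coeff r = 0)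
    (hFn : F.coeff n ≠ 0)
    (hprop : ∀ r, 0 < r → r < p → ∃ t, multisection p r F = C t * multisection p (n + 1) F) :
    ∃ (t : R) (P Q : R[X]), F = expand R p P + X ^ n * (X + C t) * expand R p Q := by
  obtain ⟨t, ht⟩ := hprop n hn₀ (by omega)
  refine ⟨t, multisection p 0 F, multisection p (n + 1) F, ?_⟩
  have hsub : ({0, n, n + 1} : Finset ℕ) ⊆ Finset.range p := by
    intro r hr
    simp only [Finset.mem_insert, Finset.mem_singleton, Finset.mem_range] at hr ⊢
    omega
  have hvanish : ∀ r ∈ Finset.range p, r ∉ ({0, n, n + 1} : Finset ℕ) →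
      X ^ r * expand R p (multisection p r F) = 0 := by
    intro r hr hr'
    simp only [Finset.mem_insert, Finset.mem_singleton, not_or] at hr'
    rw [multisection_eq_zero_of_eq_C_mul hn hdeg hlow hFn hprop (Nat.pos_of_ne_zero hr'.1)
      (Finset.mem_range.1 hr) hr'.2.1 hr'.2.2, map_zero, mul_zero]
  conv_lhs => rw [← sum_X_pow_mul_expand_multisection (by omega : p ≠ 0) F]
  rw [← Finset.sum_subset hsub hvanish, Finset.sum_insert (by simp [hn₀.ne]),
    Finset.sum_pair (by omega), ht, map_mul, expand_C]
  ring

end Decomposition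

section Derivative

theorem derivative_expand_eq_zero {R : Type*} [CommSemiring R] (p : ℕ) [CharP R p] (P : R[X]) :
    derivative (expand R p P) = 0 := by
  rw [derivative_expand, CharP.cast_eq_zero, zero_mul, mul_zero]

variable {k : Type*} [Field k]

theorem dvd_of_derivative_pow_eq_mul {f M B : k[X]} {n : ℕ} (hf : f.Separable)
    (hn₁ : ((n + 1 : ℕ) : k) ≠ 0) (hn₂ : ((n + 2 : ℕ) : k) ≠ 0) (hB : derivative B = 0)
    (hMB : derivative (f ^ (n + 2)) = M * B) : f ∣ M := by
  have hMB' : derivative (derivative (f ^ (n + 2))) = derivative M * B := by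
    rw [hMB, derivative_mul, hB, mul_zero, add_zero]
  have elim :
      M * derivative (derivative (f ^ (n + 2))) = derivative M * derivative (f ^ (n + 2)) := by
    rw [hMB', hMB]
    ring
  set c₁ : k := ((n + 1 : ℕ) : k)
  set c₂ : k := ((n + 2 : ℕ) : k)
  have hder : derivative (f ^ (n + 2)) = C c₂ * f ^ (n + 1) * derivative f :=
    derivative_pow f (n + 2)
  have hder₂ : derivative (derivative (f ^ (n + 2))) =
      C c₂ * f ^ n * (C c₁ * derivative f ^ 2 + f * derivative (derivative f)) := by
    rw [hder, derivative_mul, derivative_C_mul, derivative_pow, Nat.add_sub_cancel]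
    ring
  have cancelled : M * (C c₁ * derivative f ^ 2 + f * derivative (derivative f)) =
      derivative M * (f * derivative f) := by
    refine mul_left_cancel₀ (mul_ne_zero (C_ne_zero.2 hn₂) (pow_ne_zero n hf.ne_zero)) ?_
    rw [hder₂, hder] at elim
    linear_combination elim
  have hdvd : f ∣ M * derivative f ^ 2 * C c₁ :=
    ⟨derivative M * derivative f - M * derivative (derivative f), by linear_combination cancelled⟩
  have hcop : IsCoprime f (derivative f ^ 2) := IsCoprime.pow_right hf
  exact hcop.dvd_of_dvd_mul_right ((isUnit_C.2 hn₁.isUnit).dvd_mul_right.1 hdvd)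

end Derivative

section LowestCoefficient

variable {R : Type*} [CommSemiring R] {f : R[X]}

theorem coeff_pow_eq_zero_of_lt (h₀ : f.coeff 0 = 0) {n r : ℕ} (hr : r < n) :
    (f ^ n).coeff r = 0 :=
  X_pow_dvd_iff.1 (pow_dvd_pow_of_dvd (X_dvd_iff.2 h₀) n) r hr

theorem coeff_pow_self_of_coeff_zero (h₀ : f.coeff 0 = 0) (n : ℕ) :
    (f ^ n).coeff n = f.coeff 1 ^ n := by
  obtain ⟨h, rfl⟩ := X_dvd_iff.2 h₀
  rw [mul_pow, coeff_X_pow_mul', if_pos le_rfl, Nat.sub_self, coeff_X_mul, coeff_zero_eq_eval_zero,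
    coeff_zero_eq_eval_zero, eval_pow]

theorem coeff_one_ne_zero_of_separable [Nontrivial R] (hf : f.Separable) (h₀ : f.coeff 0 = 0) :
    f.coeff 1 ≠ 0 := by
  have h := hf.eval₂_derivative_ne_zero (RingHom.id R) (x := 0)
    (by rw [eval₂_id, ← coeff_zero_eq_eval_zero, h₀])
  rwa [eval₂_id, ← coeff_zero_eq_eval_zero, coeff_derivative, Nat.cast_zero, zero_add, zero_add,
    mul_one] at h

end LowestCoefficient

section CartierManin

/-- The Cartier–Manin matrix of the hyperelliptic curve `y ^ 2 = f(x)` of genus `g` in odd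
characteristic `p`. Rows and columns are numbered from zero, hence the shifts by one in the
exponent `p * i - j` of the usual convention. For `g > p` the subtraction can truncate; it then
picks the coefficient of `X ^ 0` in `f ^ ((p - 1) / 2)`, which vanishes when `f(0) = 0`. -/
noncomputable def cartierManin {R : Type*} [CommSemiring R] (p g : ℕ) (f : R[X]) :
    Matrix (Fin g) (Fin g) R :=
  Matrix.of fun i j => (f ^ ((p - 1) / 2)).coeff (p * (i + 1) - (j + 1))

theorem cartierManin_apply_eq_coeff_multisection {R : Type*} [CommSemiring R] {p g : ℕ} (f : R[X])
    (i j : Fin g) (hj : (j : ℕ) < p) :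
    cartierManin p g f i j = (multisection p (p - (j + 1)) (f ^ ((p - 1) / 2))).coeff i := by
  have hp : p ≠ 0 := by omega
  rw [cartierManin, Matrix.of_apply, coeff_multisection hp, Nat.mul_succ, Nat.add_sub_assoc hj]

variable {k : Type*} [Field k] {p : ℕ} {f : k[X]}

theorem exists_multisection_eq_C_mul_of_rank_cartierManin_le_one
    (hrank : (cartierManin p (p - 1) f).rank ≤ 1)
    (hdeg : (f ^ ((p - 1) / 2)).natDegree < p * (p - 1)) {i₀ s : ℕ} (hi₀ : i₀ < p - 1)
    (hs₀ : 0 < s) (hsp : s < p) (hcoeff : (f ^ ((p - 1) / 2)).coeff (p * i₀ + s) ≠ 0)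
    {r : ℕ} (hr₀ : 0 < r) (hrp : r < p) :
    ∃ t, multisection p r (f ^ ((p - 1) / 2)) = C t * multisection p s (f ^ ((p - 1) / 2)) := by
  have hp : p ≠ 0 := by omega
  have entry (i : Fin (p - 1)) {r : ℕ} (hr₀ : 0 < r) (hrp : r < p) :
      cartierManin p (p - 1) f i ⟨p - 1 - r, by omega⟩ =
        (multisection p r (f ^ ((p - 1) / 2))).coeff i := by
    have hcol : p - (p - 1 - r + 1) = r := by omega
    rw [cartierManin_apply_eq_coeff_multisection f i _ (by simp only; omega), hcol]
  obtain ⟨t, ht⟩ := exists_col_eq_smul_of_rank_le_one hrank (i₀ := ⟨i₀, hi₀⟩)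
    (j₀ := ⟨p - 1 - s, by omega⟩) (by rwa [entry _ hs₀ hsp, coeff_multisection hp])
    ⟨p - 1 - r, by omega⟩
  refine ⟨t, ext fun i => ?_⟩
  rw [coeff_C_mul]
  by_cases hi : i < p - 1
  · rw [← entry ⟨i, hi⟩ hr₀ hrp, ← entry ⟨i, hi⟩ hs₀ hsp]
    exact congrFun ht ⟨i, hi⟩
  · have hlarge : p * (p - 1) ≤ p * i := Nat.mul_le_mul_left p (not_lt.1 hi)
    rw [coeff_multisection hp, coeff_multisection hp, coeff_eq_zero_of_natDegree_lt (by omega),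
      coeff_eq_zero_of_natDegree_lt (by omega), mul_zero]

theorem exists_pow_eq_expand_add_of_rank_cartierManin_le_one {n : ℕ} (hn : 0 < n)
    (hp : p = 2 * n + 1) (hdeg : f.natDegree = 2 * p - 1) (h₀ : f.coeff 0 = 0)
    (h₁ : f.coeff 1 ≠ 0) (hrank : (cartierManin p (p - 1) f).rank ≤ 1) :
    ∃ (t : k) (P Q : k[X]), f ^ n = expand k p P + X ^ n * (X + C t) * expand k p Q := by
  obtain rfl : n = (p - 1) / 2 := by omega
  set n := (p - 1) / 2
  have hdegF : (f ^ n).natDegree = p * (p - 2) + (n + 1) := by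
    obtain ⟨l, hl⟩ : ∃ l, n = l + 1 := Nat.exists_eq_succ_of_ne_zero hn.ne'
    rw [natDegree_pow, hdeg, show p - 2 = 2 * l + 1 by omega, show 2 * p - 1 = 4 * l + 5 by omega,
      show p = 2 * l + 3 by omega, hl]
    ring
  have hdeg_lt : (f ^ n).natDegree < p * (p - 1) := by
    rw [hdegF, show p - 1 = p - 2 + 1 by omega, Nat.mul_succ]
    omega
  have htop : (f ^ n).coeff (p * (p - 2) + (n + 1)) ≠ 0 := by
    rw [← hdegF, coeff_natDegree, leadingCoeff_ne_zero]
    exact ne_zero_of_natDegree_gt (n := 0) (by omega)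
  refine exists_eq_expand_add_X_pow_mul_expand hn (by omega) hdegF
    (fun r hr => coeff_pow_eq_zero_of_lt h₀ hr) ?_ fun r hr₀ hrp =>
      exists_multisection_eq_C_mul_of_rank_cartierManin_le_one hrank hdeg_lt
        (by omega) (Nat.succ_pos n) (by omega) htop hr₀ hrp
  rw [coeff_pow_self_of_coeff_zero h₀]
  exact pow_ne_zero n h₁

end CartierManin

theorem not_dvd_derivative_of_natDegree_le {R : Type*} [Semiring R] [NoZeroDivisors R] {f g : R[X]}
    (hg : (g.natDegree : R) ≠ 0) (hgf : g.natDegree ≤ f.natDegree) : ¬ f ∣ derivative g := by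
  have hg₀ : g.natDegree ≠ 0 := fun h => hg (by rw [h, Nat.cast_zero])
  have hder : derivative g ≠ 0 := by
    intro h
    have hlead : (derivative g).coeff (g.natDegree - 1) = g.leadingCoeff * (g.natDegree : R) := by
      rw [coeff_derivative, ← Nat.cast_succ, Nat.succ_eq_add_one,
        Nat.sub_add_cancel (Nat.pos_of_ne_zero hg₀), coeff_natDegree]
    rw [h, coeff_zero] at hlead
    exact mul_ne_zero (leadingCoeff_ne_zero.2 (ne_zero_of_natDegree_gt hg₀.bot_lt)) hg hlead.symm
  intro hdvd
  exact ((natDegree_derivative_lt hg₀).trans_le hgf).not_ge (natDegree_le_of_dvd hdvd hder)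

theorem coeff_sum_Icc_C_mul_X_pow {R : Type*} [Semiring R] (c : ℕ → R) (d m : ℕ) :
    (∑ i ∈ Finset.Icc 1 d, C (c i) * X ^ i).coeff m = if m ∈ Finset.Icc 1 d then c m else 0 := by
  simp only [finsetSum_coeff, coeff_C_mul_X_pow, Finset.sum_ite_eq]

theorem natDegree_sum_Icc_C_mul_X_pow {R : Type*} [Semiring R] {c : ℕ → R} {d : ℕ} (hd : 0 < d)
    (hc : c d ≠ 0) : (∑ i ∈ Finset.Icc 1 d, C (c i) * X ^ i).natDegree = d := by
  refine natDegree_eq_of_le_of_coeff_ne_zero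
    (natDegree_sum_le_of_forall_le _ _ fun i hi =>
      (natDegree_C_mul_X_pow_le _ _).trans (Finset.mem_Icc.1 hi).2) ?_
  rwa [coeff_sum_Icc_C_mul_X_pow, if_pos (Finset.mem_Icc.2 ⟨hd, le_rfl⟩)]

theorem no_rank_one_char7_genus6_general {p : ℕ} (hp : 5 ≤ p) {k : Type*} [Field k] [CharP k p]
    {f : k[X]} (hdeg : f.natDegree = 2 * p - 1) (h₀ : f.coeff 0 = 0) (hf : f.Separable) :
    1 < (cartierManin p (p - 1) f).rank := by
  by_contra! hrank
  have hodd : Odd p := (CharP.char_is_prime_of_two_le k p (by omega)).odd_of_ne_two (by omega)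
  obtain ⟨n, hpn⟩ : ∃ n, p = 2 * (n + 2) + 1 := by
    obtain ⟨l, rfl⟩ := hodd
    exact ⟨l - 2, by omega⟩
  have cast_ne_zero {a : ℕ} (ha₀ : 0 < a) (ha : a < p) : (a : k) ≠ 0 :=
    mt (CharP.cast_eq_zero_iff k p a).1 (Nat.not_dvd_of_pos_of_lt ha₀ ha)
  obtain ⟨t, P, Q, hF⟩ := exists_pow_eq_expand_add_of_rank_cartierManin_le_one (Nat.succ_pos _) hpn
    hdeg h₀ (coeff_one_ne_zero_of_separable hf h₀) hrank
  set G : k[X] := X ^ (n + 2) * (X + C t) with hG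
  have hderF : derivative (f ^ (n + 2)) = derivative G * expand k p Q := by
    rw [hF, derivative_add, derivative_mul, derivative_expand_eq_zero, derivative_expand_eq_zero,
      zero_add, mul_zero, add_zero]
  have hdegG : G.natDegree = n + 3 := by
    rw [hG, natDegree_mul (pow_ne_zero _ X_ne_zero) (X_add_C_ne_zero t), natDegree_X_pow,
      natDegree_X_add_C]
  have hdvd : f ∣ derivative G :=
    dvd_of_derivative_pow_eq_mul hf (cast_ne_zero (Nat.succ_pos _) (by omega))
      (cast_ne_zero (Nat.succ_pos _) (by omega)) (derivative_expand_eq_zero p Q) hderF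
  have hdegG_ne : (G.natDegree : k) ≠ 0 := hdegG ▸ cast_ne_zero (Nat.succ_pos _) (by omega)
  exact not_dvd_derivative_of_natDegree_le hdegG_ne (by omega) hdvd

theorem no_rank_one_char7_genus6
    (k : Type*) [Field k] [IsAlgClosed k] [CharP k 7]
    (c : ℕ → k) (hclead : c 13 = 1)
    (f : k[X]) (hf : f = ∑ i ∈ Finset.Icc 1 13, C (c i) * X ^ i)
    (A : Matrix (Fin 6) (Fin 6) k)
    (hA : ∀ i j : Fin 6,
      A i j = (f ^ 3).coeff (7 * ((i : ℕ) + 1) - ((j : ℕ) + 1)))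
    (hsqf : Squarefree f) :
    A.rank ≠ 1 := by
  have hdeg : f.natDegree = 13 := hf ▸ natDegree_sum_Icc_C_mul_X_pow (by simp) (by simp [hclead])
  have h₀ : f.coeff 0 = 0 := by rw [hf, coeff_sum_Icc_C_mul_X_pow, if_neg (by simp)]
  obtain rfl : A = cartierManin 7 6 f := Matrix.ext hA
  exact (no_rank_one_char7_genus6_general (p := 7) (by simp) hdeg h₀
    (PerfectField.separable_iff_squarefree.2 hsqf)).ne'
end
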